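/- arXiv:1811.03357 — 2 statements merged into one kernel-verified Lean document; each statement's English description precedes it below -/
import Mathlib

section
/- Let P be a full-dimensional lattice polytope of dimension d in ℝ^d with normalized volume Vol(P) = d!·vol(P). Then the number of lattice points of P satisfies |P ∩ ℤ^d| ≤ d + Vol(P). -/
open MeasureTheory

/-- Coercion of an integer point to a real point. -/
noncomputable def toR {d : ℕ} (x : Fin d → ℤ) : Fin d → ℝ := fun i => (x i : ℝ)

lemma simp_vol (d : ℕ) :
    1 ≤ (Nat.factorial d : ENNReal) * volume {t : Fin d → ℝ | (∀ i, 0 ≤ t i) ∧ ∑ i, t i ≤ 1} := by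
  set D : Set (Fin d → ℝ) := {t : Fin d → ℝ | (∀ i, 0 ≤ t i) ∧ ∑ i, t i ≤ 1} with hD
  have h1 := volume_sum_rpow_lt_one (Fin d) (p := 1) le_rfl
  let sg : (Fin d → Bool) → Fin d → ℝ := fun ε i => if ε i then 1 else -1
  have hsub : {x : Fin d → ℝ | ∑ i, |x i| ^ (1:ℝ) < 1} ⊆
      ⋃ ε : Fin d → Bool, (Matrix.toLin' (Matrix.diagonal (sg ε))) '' D := by
    intro x hx
    simp only [Real.rpow_one, Set.mem_ofPred_eq] at hx
    rw [Set.mem_iUnion]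
    refine ⟨fun i => decide (0 ≤ x i), fun i => |x i|, ⟨fun i => abs_nonneg _, hx.le⟩, ?_⟩
    ext i
    simp only [Matrix.toLin'_apply, Matrix.mulVec_diagonal, sg]
    by_cases h : 0 ≤ x i
    · simp [h, abs_of_nonneg h]
    · simp [h, abs_of_neg (not_le.mp h)]
  have h2 := (measure_mono hsub).trans (measure_iUnion_le (μ := volume) _)
  have h3 : ∀ ε : Fin d → Bool,
      volume ((Matrix.toLin' (Matrix.diagonal (sg ε))) '' D) = volume D := by
    intro ε
    rw [Measure.addHaar_image_linearMap, LinearMap.det_toLin', Matrix.det_diagonal, Finset.abs_prod]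
    have : ∀ i, |sg ε i| = 1 := by intro i; simp only [sg]; split_ifs <;> simp
    simp [this]
  rw [h1] at h2
  simp only [h3, tsum_fintype, Finset.sum_const, Finset.card_univ, Fintype.card_pi,
    Fintype.card_bool, Finset.prod_const, Fintype.card_fin, nsmul_eq_mul, div_one] at h2
  rw [Real.Gamma_nat_eq_factorial, show (1:ℝ) + 1 = ((1:ℕ):ℝ) + 1 by norm_num,
    Real.Gamma_nat_eq_factorial, ENNReal.ofReal_div_of_pos (by positivity)] at h2
  simp only [Nat.factorial_one, Nat.cast_one, mul_one, ENNReal.ofReal_natCast] at h2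
  rw [ENNReal.ofReal_pow (by norm_num)] at h2
  have hf : (Nat.factorial d : ENNReal) ≠ 0 := by exact_mod_cast Nat.factorial_ne_zero d
  rw [ENNReal.div_le_iff hf (ENNReal.natCast_ne_top _)] at h2
  push_cast at h2
  rw [ENNReal.ofReal_ofNat, mul_assoc] at h2
  have := (ENNReal.mul_le_mul_iff_right (a := (2:ENNReal)^d) (by simp) (by finiteness)
    (b := 1) (c := volume D * (Nat.factorial d : ENNReal))).1 (by simpa using h2)
  rwa [mul_comm] at this

lemma hull_vol {d : ℕ} (A : Set (Fin d → ℝ)) (hint : ∀ a ∈ A, ∃ z : Fin d → ℤ, toR z = a)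
    (x : Fin d → ℝ) (hx : x ∈ A) (hA : affineSpan ℝ A = ⊤) :
    1 ≤ (Nat.factorial d : ENNReal) * volume (convexHull ℝ A) := by
  have hs : vectorSpan ℝ A = ⊤ :=
    (AffineSubspace.affineSpan_eq_top_iff_vectorSpan_eq_top_of_nonempty ℝ _ _ ⟨x, hx⟩).1 hA
  rw [vectorSpan_eq_span_vsub_set_right ℝ hx] at hs
  have hw := Submodule.exists_fun_fin_finrank_span_eq ℝ ((fun y => y -ᵥ x) '' A)
  rw [hs, finrank_top, Module.finrank_fin_fun] at hw
  obtain ⟨w, hwA, -, hli⟩ := hw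
  choose a haA haw using hwA
  choose z hz using hint
  let M : Matrix (Fin d) (Fin d) ℤ := fun i j => z (a i) (haA i) j - z x hx j
  have hM : M.map (Int.cast : ℤ → ℝ) = Matrix.of w := by
    ext i j
    have e1 := congrFun (hz (a i) (haA i)) j
    have e2 := congrFun (hz x hx) j
    simp only [toR] at e1 e2
    rw [Matrix.map_apply, Matrix.of_apply, ← haw]
    simp only [M, Int.cast_sub, e1, e2, vsub_eq_sub, Pi.sub_apply]
  have hdet : (M.det : ℝ) = (Matrix.of w).det := by
    rw [← hM]; exact Int.cast_det M
  have hne : (Matrix.of w).det ≠ 0 := by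
    have h := Matrix.linearIndependent_rows_iff_isUnit (A := Matrix.of w) |>.1 hli
    exact ((Matrix.isUnit_iff_isUnit_det _).1 h).ne_zero
  have hge : 1 ≤ |(Matrix.of w).det| := by
    rw [← hdet] at hne ⊢
    have : M.det ≠ 0 := by exact_mod_cast hne
    exact_mod_cast Int.one_le_abs this
  set D : Set (Fin d → ℝ) := {t : Fin d → ℝ | (∀ i, 0 ≤ t i) ∧ ∑ i, t i ≤ 1} with hD
  have hsub : (fun y => x + y) '' (Matrix.toLin' (Matrix.of w).transpose '' D) ⊆ convexHull ℝ A := by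
    rintro _ ⟨_, ⟨t, ⟨ht0, ht1⟩, rfl⟩, rfl⟩
    have key : x + Matrix.toLin' (Matrix.of w).transpose t
        = ∑ o : Option (Fin d), (o.elim (1 - ∑ i, t i) t) • (o.elim x a) := by
      rw [Fintype.sum_option]
      ext j
      simp only [Matrix.toLin'_apply, Matrix.mulVec, dotProduct, Pi.add_apply, Option.elim,
        Finset.sum_apply, Pi.smul_apply, smul_eq_mul, Matrix.transpose_apply, Matrix.of_apply, ← haw,
        vsub_eq_sub, Pi.sub_apply, sub_mul, Finset.sum_sub_distrib, Finset.sum_mul]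
      simp only [mul_comm]
      ring
    show x + Matrix.toLin' (Matrix.of w).transpose t ∈ _
    rw [key]
    refine (convex_convexHull ℝ A).sum_mem ?_ ?_ ?_
    · rintro (_ | i) - <;> simp [ht0, ht1]
    · rw [Fintype.sum_option]; simp
    · rintro (_ | i) -
      · exact subset_convexHull ℝ A hx
      · exact subset_convexHull ℝ A (haA i)
  have h2 := measure_mono (μ := volume) hsub
  rw [Set.image_add_left, measure_preimage_add, Measure.addHaar_image_linearMap,
    LinearMap.det_toLin', Matrix.det_transpose] at h2
  have h3 : volume D ≤ ENNReal.ofReal |(Matrix.of w).det| * volume D := by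
    have : 1 ≤ ENNReal.ofReal |(Matrix.of w).det| := ENNReal.one_le_ofReal.2 hge
    calc volume D = 1 * volume D := (one_mul _).symm
      _ ≤ _ := by gcongr
  calc 1 ≤ (Nat.factorial d : ENNReal) * volume D := simp_vol d
    _ ≤ _ := mul_le_mul_right (h3.trans h2) _

lemma vanish {d : ℕ} {S : Set (Fin d → ℝ)} (hS : affineSpan ℝ S = ⊤)
    (φ : (Fin d → ℝ) →ₗ[ℝ] ℝ) (c : ℝ) (h : ∀ s ∈ S, φ s + c = 0) (x : Fin d → ℝ) :
    φ x + c = 0 := by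
  have hx : x ∈ affineSpan ℝ S := by rw [hS]; trivial
  refine affineSpan_induction (p := fun x => φ x + c = 0) hx h ?_
  intro t u v w hu hv hw
  simp only [vsub_eq_sub, vadd_eq_add, map_add, map_smul, map_sub, smul_eq_mul]
  linear_combination t * hu - t * hv + hw

/-- A non spanning set lies in the zero set of a nonzero affine functional. -/
lemma exists_vanish {d : ℕ} {A : Set (Fin d → ℝ)} (hA : affineSpan ℝ A ≠ ⊤) :
    ∃ (φ : (Fin d → ℝ) →ₗ[ℝ] ℝ) (c : ℝ), (∃ y, φ y + c ≠ 0) ∧ ∀ s ∈ A, φ s + c = 0 := by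
  rcases A.eq_empty_or_nonempty with rfl | ⟨x, hx⟩
  · exact ⟨0, 1, ⟨0, by simp⟩, by simp⟩
  have h : vectorSpan ℝ A ≠ ⊤ := fun h => hA
    ((AffineSubspace.affineSpan_eq_top_iff_vectorSpan_eq_top_of_nonempty ℝ _ _ ⟨x, hx⟩).2 h)
  obtain ⟨φ, hφ, hk⟩ := Submodule.exists_le_ker_of_lt_top _ (lt_top_iff_ne_top.2 h)
  refine ⟨φ, - φ x, ?_, ?_⟩
  · by_contra! hc
    apply hφ
    ext1 i
    have h0 := hc 0
    simp at h0
    have := hc (Pi.single i 1)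
    ext
    simpa [h0] using this
  · intro s hs
    have := hk (vsub_mem_vectorSpan ℝ hs hx)
    simp at this
    linarith

/-- The visible facet. -/
lemma visible {d : ℕ} (S : Finset (Fin d → ℝ)) (hS : affineSpan ℝ (S : Set (Fin d → ℝ)) = ⊤)
    (x : Fin d → ℝ) (hx : x ∉ convexHull ℝ (S : Set (Fin d → ℝ))) :
    ∃ (φ : (Fin d → ℝ) →ₗ[ℝ] ℝ) (c : ℝ), φ x + c < 0 ∧ (∀ s ∈ S, 0 ≤ φ s + c) ∧
      affineSpan ℝ (insert x {s | s ∈ S ∧ φ s + c = 0}) = ⊤ := by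
  classical
  let Q : ℕ → Prop := fun n => ∃ (φ : (Fin d → ℝ) →ₗ[ℝ] ℝ) (c : ℝ), φ x + c < 0 ∧
    (∀ s ∈ S, 0 ≤ φ s + c) ∧ S.card - (S.filter (fun s => φ s + c = 0)).card = n
  have hQ : ∃ n, Q n := by
    obtain ⟨f, u, hf, hu⟩ := geometric_hahn_banach_point_closed (convex_convexHull ℝ _)
      (S.finite_toSet.isCompact_convexHull ℝ).isClosed hx
    refine ⟨_, f.toLinearMap, -u, ?_, ?_, rfl⟩
    · simpa using hf
    · intro s hs
      have := hu s (subset_convexHull ℝ _ hs)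
      simpa using this.le
  obtain ⟨φ, c, hxn, hpos, hcard⟩ := Nat.find_spec hQ
  refine ⟨φ, c, hxn, hpos, ?_⟩
  by_contra hne
  obtain ⟨ψ, b, ⟨y, hy⟩, hv⟩ := exists_vanish hne
  -- choose the sign
  obtain ⟨ψ, b, hv, s₀, hs₀, hneg⟩ : ∃ (ψ : (Fin d → ℝ) →ₗ[ℝ] ℝ) (b : ℝ),
      (∀ s ∈ insert x {s | s ∈ S ∧ φ s + c = 0}, ψ s + b = 0) ∧ ∃ s ∈ S, ψ s + b < 0 := by
    obtain ⟨s, hs, hsn⟩ : ∃ s ∈ S, ψ s + b ≠ 0 := by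
      by_contra! hc
      exact hy (vanish hS ψ b hc y)
    rcases lt_or_gt_of_ne hsn with h | h
    · exact ⟨ψ, b, hv, s, hs, h⟩
    · refine ⟨-ψ, -b, ?_, s, hs, ?_⟩
      · intro s hs
        have := hv s hs
        simp; linarith
      · simp; linarith
  obtain ⟨m, hm, hmin⟩ := Finset.exists_min_image (S.filter (fun s => ψ s + b < 0))
    (fun s => (φ s + c) / (-(ψ s + b))) ⟨s₀, by simp [hs₀, hneg]⟩
  rw [Finset.mem_filter] at hm
  set t := (φ m + c) / (-(ψ m + b)) with ht
  have hmneg : 0 < -(ψ m + b) := by linarith [hm.2]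
  have ht0 : 0 ≤ t := div_nonneg (hpos m hm.1) hmneg.le
  have htm : φ m + c + t * (ψ m + b) = 0 := by
    have : t * (-(ψ m + b)) = φ m + c := div_mul_cancel₀ _ hmneg.ne'
    linarith
  have hmQ : S.card - (S.filter (fun s => (φ + t • ψ) s + (c + t * b) = 0)).card < Nat.find hQ := by
    rw [← hcard]
    have hlt : (S.filter (fun s => φ s + c = 0)).card <
        (S.filter (fun s => (φ + t • ψ) s + (c + t * b) = 0)).card := by
      apply Finset.card_lt_card
      rw [Finset.ssubset_iff_of_subset]
      · refine ⟨m, ?_, ?_⟩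
        · simp only [Finset.mem_filter, hm.1, true_and, LinearMap.add_apply, LinearMap.smul_apply,
            smul_eq_mul]
          linarith
        · intro h
          rw [Finset.mem_filter] at h
          have := hv m (Or.inr h)
          linarith
      · intro s hs
        rw [Finset.mem_filter] at hs ⊢
        have := hv s (Or.inr hs)
        refine ⟨hs.1, ?_⟩
        simp only [LinearMap.add_apply, LinearMap.smul_apply, smul_eq_mul]
        linear_combination hs.2 + t * this
    have := Finset.card_filter_le S (fun s => (φ + t • ψ) s + (c + t * b) = 0)
    omega
  refine Nat.find_min hQ hmQ ⟨_, _, ?_, ?_, rfl⟩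
  · have := hv x (Or.inl rfl)
    simp only [LinearMap.add_apply, LinearMap.smul_apply, smul_eq_mul]
    have : φ x + t * ψ x + (c + t * b) = φ x + c := by linear_combination t * this
    linarith
  · intro s hs
    simp only [LinearMap.add_apply, LinearMap.smul_apply, smul_eq_mul]
    have e : φ s + t * ψ s + (c + t * b) = φ s + c + t * (ψ s + b) := by ring
    rw [e]
    rcases lt_or_ge (ψ s + b) 0 with h | h
    · have := hmin s (by simp [hs, h])
      rw [le_div_iff₀ (by linarith)] at this
      linarith
    · have := hpos s hs
      positivity

lemma hull_step {d : ℕ} (S : Finset (Fin d → ℝ)) (x : Fin d → ℝ)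
    (hint : ∀ a ∈ insert x (S : Set (Fin d → ℝ)), ∃ z : Fin d → ℤ, toR z = a)
    (hS : affineSpan ℝ (S : Set (Fin d → ℝ)) = ⊤)
    (hx : x ∉ convexHull ℝ (S : Set (Fin d → ℝ))) :
    (Nat.factorial d : ENNReal) * volume (convexHull ℝ (S : Set (Fin d → ℝ))) + 1 ≤
      (Nat.factorial d : ENNReal) * volume (convexHull ℝ (insert x (S : Set (Fin d → ℝ)))) := by
  obtain ⟨φ, c, hxn, hpos, htop⟩ := visible S hS x hx
  set T : Set (Fin d → ℝ) := insert x {s | s ∈ S ∧ φ s + c = 0} with hT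
  have hTS : T ⊆ insert x (S : Set (Fin d → ℝ)) := Set.insert_subset_insert fun s hs => hs.1
  have hv := hull_vol T (fun a ha => hint a (hTS ha)) x (Or.inl rfl) htop
  have hsub : convexHull ℝ (S : Set (Fin d → ℝ)) ∪ convexHull ℝ T ⊆
      convexHull ℝ (insert x (S : Set (Fin d → ℝ))) :=
    Set.union_subset (convexHull_mono (Set.subset_insert _ _)) (convexHull_mono hTS)
  have hTfin : T.Finite := (S.finite_toSet.insert x).subset hTS
  have hcS : convexHull ℝ (S : Set (Fin d → ℝ)) ⊆ {y | -c ≤ φ y} :=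
    convexHull_min (fun s hs => by have := hpos s hs; simp; linarith)
      (convex_halfSpace_ge φ.isLinear _)
  have hcT : convexHull ℝ T ⊆ {y | φ y ≤ -c} := by
    refine convexHull_min ?_ (convex_halfSpace_le φ.isLinear _)
    rintro s (rfl | hs)
    · simp; linarith
    · have := hs.2
      simp; linarith
  have hdis : AEDisjoint volume (convexHull ℝ (S : Set (Fin d → ℝ))) (convexHull ℝ T) := by
    have hz : volume ((affineSpan ℝ {y | φ y + c = 0} : AffineSubspace ℝ (Fin d → ℝ)) : Set (Fin d → ℝ)) = 0 := by
      apply Measure.addHaar_affineSubspace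
      intro h
      have := vanish h φ c (fun s hs => hs) x
      linarith
    refine measure_mono_null ?_ hz
    rintro y ⟨h1, h2⟩
    apply subset_affineSpan
    have h1 := hcS h1
    have h2 := hcT h2
    simp at h1 h2 ⊢
    linarith
  have := measure_mono (μ := volume) hsub
  rw [measure_union₀ (hTfin.isCompact_convexHull ℝ).isClosed.measurableSet.nullMeasurableSet hdis]
    at this
  calc _ ≤ (Nat.factorial d : ENNReal) * volume (convexHull ℝ (S : Set (Fin d → ℝ)))
        + (Nat.factorial d : ENNReal) * volume (convexHull ℝ T) := by gcongr
    _ ≤ _ := by rw [← mul_add]; gcongr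

lemma main_bound {d : ℕ} (n : ℕ) : ∀ (S : Finset (Fin d → ℝ)), S.card = n →
    (∀ a ∈ S, ∃ z : Fin d → ℤ, toR z = a) → affineSpan ℝ (S : Set (Fin d → ℝ)) = ⊤ →
    (S.card : ENNReal) ≤ d + (Nat.factorial d : ENNReal) * volume (convexHull ℝ (S : Set (Fin d → ℝ))) := by
  classical
  induction n with
  | zero =>
    intro S h _ _
    simp [h]
  | succ n ih =>
    intro S hcard hint hS
    set K := convexHull ℝ (S : Set (Fin d → ℝ)) with hK
    have hES : K.extremePoints ℝ ⊆ S := extremePoints_convexHull_subset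
    by_cases hex : ∃ e ∈ K.extremePoints ℝ, affineSpan ℝ ((S.erase e : Finset _) : Set (Fin d → ℝ)) = ⊤
    · obtain ⟨e, he, hspan⟩ := hex
      have heS : e ∈ S := hES he
      have hc : (S.erase e).card = n := by rw [Finset.card_erase_of_mem heS]; omega
      have h1 := ih (S.erase e) hc (fun a ha => hint a (Finset.mem_of_mem_erase ha)) hspan
      have hins : insert e ((S.erase e : Finset _) : Set (Fin d → ℝ)) = S := by
        rw [← Finset.coe_insert, Finset.insert_erase heS]
      have hnot : e ∉ convexHull ℝ ((S.erase e : Finset _) : Set (Fin d → ℝ)) := by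
        intro h
        have h2 := ((convex_convexHull ℝ _).mem_extremePoints_iff_convex_sdiff.1 he).2
        have h3 : convexHull ℝ ((S.erase e : Finset _) : Set (Fin d → ℝ)) ⊆ K \ {e} := by
          refine convexHull_min ?_ h2
          intro s hs
          rw [Finset.mem_coe, Finset.mem_erase] at hs
          exact ⟨subset_convexHull ℝ _ hs.2, hs.1⟩
        exact (h3 h).2 rfl
      have h4 := hull_step (S.erase e) e (by rw [hins]; exact hint) hspan hnot
      rw [hins] at h4
      rw [hc] at h1
      rw [hcard]
      push_cast
      calc (n : ENNReal) + 1 ≤ (d + (Nat.factorial d : ENNReal) * volume (convexHull ℝ ((S.erase e : Finset _) : Set (Fin d → ℝ)))) + 1 := by gcongr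
        _ ≤ _ := by rw [add_assoc]; gcongr
    · push Not at hex
      have hfin : (K.extremePoints ℝ).Finite := S.finite_toSet.subset hES
      have hKc : IsCompact K := S.finite_toSet.isCompact_convexHull ℝ
      have hspanE : affineSpan ℝ (K.extremePoints ℝ) = ⊤ := by
        have h1 := closure_convexHull_extremePoints hKc (convex_convexHull ℝ _)
        rw [(hfin.isCompact_convexHull ℝ).isClosed.closure_eq] at h1
        rw [← affineSpan_convexHull, h1, hK, affineSpan_convexHull, hS]
      have hg : ∀ e ∈ K.extremePoints ℝ, ∃ (φ : (Fin d → ℝ) →ₗ[ℝ] ℝ) (c : ℝ), φ e + c = 1 ∧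
          ∀ s ∈ S, s ≠ e → φ s + c = 0 := by
        intro e he
        obtain ⟨φ, c, ⟨y, hy⟩, hv⟩ := exists_vanish (hex e he)
        have hne : φ e + c ≠ 0 := by
          intro h0
          refine hy (vanish hS φ c (fun s hs => ?_) y)
          by_cases h : s = e
          · rw [h, h0]
          · exact hv s (by simpa [h] using hs)
        refine ⟨(φ e + c)⁻¹ • φ, (φ e + c)⁻¹ * c, ?_, ?_⟩
        · simp only [LinearMap.smul_apply, smul_eq_mul]
          rw [← mul_add, inv_mul_cancel₀ hne]
        · intro s hs hse
          simp only [LinearMap.smul_apply, smul_eq_mul]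
          rw [← mul_add, hv s (by simpa [hse] using hs), mul_zero]
      choose! φ c h1 h0 using hg
      have hSE : ∀ y ∈ S, y ∈ K.extremePoints ℝ := by
        intro y hy
        by_contra hyE
        have := vanish hspanE (∑ e ∈ hfin.toFinset, φ e) (∑ e ∈ hfin.toFinset, c e - 1) (by
          intro s hs
          rw [LinearMap.sum_apply, ← add_sub_assoc, ← Finset.sum_add_distrib,
            Finset.sum_eq_single_of_mem s (by simpa using hs), h1 s hs, sub_self]
          intro e he hes
          exact h0 e (by simpa using he) s (hES hs) hes.symm) y
        rw [LinearMap.sum_apply, ← add_sub_assoc, ← Finset.sum_add_distrib,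
          Finset.sum_eq_zero] at this
        · norm_num at this
        · intro e he
          have he : e ∈ K.extremePoints ℝ := by simpa using he
          exact h0 e he y hy (fun h => hyE (h ▸ he))
      have hind : AffineIndependent ℝ (fun s : S => (s : Fin d → ℝ)) := by
        rw [affineIndependent_iff]
        intro t w hw0 hw1 e he
        have heE := hSE e e.2
        have h2 : ∑ i ∈ t, w i * (φ e i + c e) = 0 := by
          have : ∑ i ∈ t, w i * φ e i = 0 := by
            have := congrArg (φ e) hw1
            simpa using this
          simp only [mul_add, Finset.sum_add_distrib, this, ← Finset.sum_mul, hw0]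
          simp
        rw [Finset.sum_eq_single_of_mem e he, h1 e heE, mul_one] at h2
        · exact h2
        · intro i _ hie
          rw [h0 e heE i i.2 (fun h => hie (Subtype.ext h)), mul_zero]
      have hle := hind.card_le_finrank_succ
      have hle2 := (Submodule.finrank_le (vectorSpan ℝ (Set.range (fun s : S => (s : Fin d → ℝ)))))
      rw [Module.finrank_fin_fun] at hle2
      rw [Fintype.card_coe] at hle
      obtain ⟨x, hx⟩ : S.Nonempty := Finset.card_pos.1 (by omega)
      have hv := hull_vol (S : Set (Fin d → ℝ)) hint x hx hS
      calc (S.card : ENNReal) ≤ ((d + 1 : ℕ) : ENNReal) := by exact_mod_cast (by omega)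
        _ = d + 1 := by push_cast; rfl
        _ ≤ _ := by gcongr

theorem stmt0 (d : ℕ) (hd : 0 < d) (V : Finset (Fin d → ℤ)) (hV : V.Nonempty)
    (P : Set (Fin d → ℝ)) (hP : P = convexHull ℝ (toR '' (V : Set (Fin d → ℤ))))
    (hfull : affineSpan ℝ P = ⊤) :
    ({x : Fin d → ℤ | toR x ∈ P}.ncard : ℝ)
      ≤ d + (Nat.factorial d : ℝ) * (volume P).toReal := by
  classical
  by_cases hfin : {x : Fin d → ℤ | toR x ∈ P}.Finite
  swap
  · rw [Set.Infinite.ncard hfin]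
    push_cast
    positivity
  have hinj : Function.Injective (toR (d := d)) := by
    intro x y h
    ext i
    have := congrFun h i
    simpa [toR] using this
  let S : Finset (Fin d → ℝ) := hfin.toFinset.image toR
  have hcard : S.card = {x : Fin d → ℤ | toR x ∈ P}.ncard := by
    rw [Finset.card_image_of_injective _ hinj, Set.ncard_eq_toFinset_card _ hfin]
  have hSP : convexHull ℝ (S : Set (Fin d → ℝ)) = P := by
    apply Set.Subset.antisymm
    · refine convexHull_min ?_ (by rw [hP]; exact convex_convexHull ℝ _)
      intro y hy
      simp only [S, Finset.coe_image, Set.Finite.coe_toFinset] at hy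
      obtain ⟨z, hz, rfl⟩ := hy
      exact hz
    · rw [hP]
      apply convexHull_mono
      rintro _ ⟨z, hz, rfl⟩
      simp only [S, Finset.coe_image, Set.Finite.coe_toFinset]
      refine ⟨z, ?_, rfl⟩
      show toR z ∈ P
      rw [hP]
      exact subset_convexHull ℝ _ ⟨z, hz, rfl⟩
  have hspan : affineSpan ℝ (S : Set (Fin d → ℝ)) = ⊤ := by
    rw [← affineSpan_convexHull, hSP, hfull]
  have hmain := main_bound _ S rfl (by
    intro a ha
    obtain ⟨z, _, hz⟩ := Finset.mem_image.1 ha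
    exact ⟨z, hz⟩) hspan
  have hfinite : volume (convexHull ℝ (S : Set (Fin d → ℝ))) ≠ ⊤ :=
    (S.finite_toSet.isCompact_convexHull ℝ).measure_lt_top.ne
  rw [hSP] at hmain hfinite
  rw [hcard] at hmain
  have h5 := ENNReal.toReal_mono (by finiteness) hmain
  rw [ENNReal.toReal_add (by finiteness) (by finiteness), ENNReal.toReal_mul] at h5
  simpa using h5
end

section
/- For each nonnegative integer k, the polytope Q = conv(0, e₁, e₂, e₃, e₁+e₃, e₂+e₃, e₁+e₂+ke₃, e₁+e₂+(k+1)e₃) ⊂ ℝ³ has normalized volume k + 6 and exactly 8 lattice points (its vertices) when k ≥ 2; consequently its h*-vector is (1, 4, k+1, 0). -/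
open MeasureTheory Pointwise

/-- The inequality description of the polytope. -/
def ineqSet (k : ℕ) : Set (Fin 3 → ℝ) :=
  {p | 0 ≤ p 0 ∧ p 0 ≤ 1 ∧ 0 ≤ p 1 ∧ p 1 ≤ 1 ∧ 0 ≤ p 2 ∧ (k : ℝ) * (p 0 + p 1 - 1) ≤ p 2 ∧
    p 2 ≤ 1 + k * p 0 ∧ p 2 ≤ 1 + k * p 1}

/-- The vertices. -/
def vv (k : ℕ) : Fin 8 → Fin 3 → ℤ := ![![0, 0, 0], ![1, 0, 0], ![0, 1, 0], ![0, 0, 1], ![1, 0, 1],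
      ![0, 1, 1], ![1, 1, (k : ℤ)], ![1, 1, (k : ℤ) + 1]]

lemma convex_ineqSet (k : ℕ) : Convex ℝ (ineqSet k) := by
  rintro p ⟨h1, h2, h3, h4, h5, h6, h7, h8⟩ q ⟨g1, g2, g3, g4, g5, g6, g7, g8⟩ a b ha hb hab
  have hb' : b = 1 - a := by linarith
  simp only [ineqSet, Set.mem_ofPred_eq, Pi.add_apply, Pi.smul_apply, smul_eq_mul]
  have key : ∀ x y : ℝ, 0 ≤ x → 0 ≤ y → 0 ≤ a * x + b * y := fun x y hx hy => by positivity
  refine ⟨key _ _ h1 g1, ?_, key _ _ h3 g3, ?_, key _ _ h5 g5, ?_, ?_, ?_⟩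
  · have := key _ _ (sub_nonneg.2 h2) (sub_nonneg.2 g2); subst hb'; linarith
  · have := key _ _ (sub_nonneg.2 h4) (sub_nonneg.2 g4); subst hb'; linarith
  · have := key _ _ (sub_nonneg.2 h6) (sub_nonneg.2 g6); subst hb'; linarith
  · have := key _ _ (sub_nonneg.2 h7) (sub_nonneg.2 g7); subst hb'; linarith
  · have := key _ _ (sub_nonneg.2 h8) (sub_nonneg.2 g8); subst hb'; linarith

lemma comb3 {S : Set (Fin 3 → ℝ)} (hS : Convex ℝ S) {u v w p : Fin 3 → ℝ} (hu : u ∈ S) (hv : v ∈ S)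
    (hw : w ∈ S) (a b c : ℝ) (ha : 0 ≤ a) (hb : 0 ≤ b) (hc : 0 ≤ c) (habc : a + b + c = 1)
    (hp : ∀ i, p i = a * u i + b * v i + c * w i) : p ∈ S := by
  have h := hS.sum_mem (t := Finset.univ) (w := ![a, b, c]) (z := ![u, v, w])
    (by intro i _; fin_cases i <;> simpa) (by simp [Fin.sum_univ_three, habc])
    (by intro i _; fin_cases i <;> simpa)
  have : p = ∑ i : Fin 3, (![a, b, c] : Fin 3 → ℝ) i • (![u, v, w] : Fin 3 → Fin 3 → ℝ) i := by
    ext j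
    simp [Fin.sum_univ_three, hp]
  rw [this]; exact h

lemma hull_eq (k : ℕ) : convexHull ℝ (Set.range fun a : Fin 8 => toR (vv k a)) = ineqSet k := by
  apply Set.Subset.antisymm
  · apply convexHull_min _ (convex_ineqSet k)
    rintro _ ⟨a, rfl⟩
    have hk : (0 : ℝ) ≤ k := by positivity
    fin_cases a <;> simp [ineqSet, toR, vv] <;> (try constructor) <;> linarith
  · rintro p ⟨h1, h2, h3, h4, h5, h6, h7, h8⟩
    set S := convexHull ℝ (Set.range fun a : Fin 8 => toR (vv k a)) with hSdef
    have hS : Convex ℝ S := convex_convexHull ℝ _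
    have hm : ∀ a, toR (vv k a) ∈ S := fun a => subset_convexHull ℝ _ ⟨a, rfl⟩
    have hk : (0 : ℝ) ≤ k := by positivity
    obtain ⟨l, hl, hl1, hl2⟩ : ∃ l : ℝ, ![p 0, p 1, l] ∈ S ∧ l ≤ p 2 ∧
        (l = 0 ∨ l = k * (p 0 + p 1 - 1)) := by
      rcases le_total (p 0 + p 1) 1 with h | h
      · refine ⟨0, ?_, h5, Or.inl rfl⟩
        refine comb3 hS (hm 0) (hm 1) (hm 2) (1 - p 0 - p 1) (p 0) (p 1) (by linarith) h1 h3
          (by ring) ?_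
        intro i; fin_cases i <;> simp [toR, vv]
      · refine ⟨_, ?_, h6, Or.inr rfl⟩
        refine comb3 hS (hm 1) (hm 2) (hm 6) (1 - p 1) (1 - p 0) (p 0 + p 1 - 1) (by linarith)
          (by linarith) (by linarith) (by ring) ?_
        intro i; fin_cases i <;> simp [toR, vv] <;> ring
    obtain ⟨u, hu, hu1, hu2⟩ : ∃ u : ℝ, ![p 0, p 1, u] ∈ S ∧ p 2 ≤ u ∧
        (u = 1 + k * p 0 ∨ u = 1 + k * p 1) := by
      rcases le_total (p 0) (p 1) with h | h
      · refine ⟨_, ?_, h7, Or.inl rfl⟩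
        refine comb3 hS (hm 3) (hm 5) (hm 7) (1 - p 1) (p 1 - p 0) (p 0) (by linarith)
          (by linarith) (by linarith) (by ring) ?_
        intro i; fin_cases i <;> simp [toR, vv] <;> ring
      · refine ⟨_, ?_, h8, Or.inr rfl⟩
        refine comb3 hS (hm 3) (hm 4) (hm 7) (1 - p 0) (p 0 - p 1) (p 1) (by linarith)
          (by linarith) (by linarith) (by ring) ?_
        intro i; fin_cases i <;> simp [toR, vv] <;> ring
    have hlu : l < u := by
      have e1 := mul_nonneg hk h1
      have e2 := mul_nonneg hk h3
      have e3 := mul_nonneg hk (sub_nonneg.2 h2)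
      have e4 := mul_nonneg hk (sub_nonneg.2 h4)
      rcases hl2 with rfl | rfl <;> rcases hu2 with rfl | rfl <;> nlinarith
    have hd : u - l ≠ 0 := by linarith
    refine comb3 hS hl hu hu ((u - p 2) / (u - l)) ((p 2 - l) / (u - l)) 0
      (div_nonneg (by linarith) (by linarith)) (div_nonneg (by linarith) (by linarith)) le_rfl
      (by field_simp; ring) ?_
    intro i
    fin_cases i <;> simp <;> field_simp <;> ring

lemma mem_scaled (k t : ℕ) (ht : 1 ≤ t) (x : Fin 3 → ℤ) :
    toR x ∈ (t : ℝ) • ineqSet k ↔ 0 ≤ x 0 ∧ x 0 ≤ t ∧ 0 ≤ x 1 ∧ x 1 ≤ t ∧ 0 ≤ x 2 ∧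
      (k : ℤ) * (x 0 + x 1 - t) ≤ x 2 ∧ x 2 ≤ t + k * x 0 ∧ x 2 ≤ t + k * x 1 := by
  have ht0 : (0 : ℝ) < t := by exact_mod_cast ht
  rw [Set.mem_smul_set_iff_inv_smul_mem₀ ht0.ne']
  simp only [ineqSet, Set.mem_ofPred_eq, Pi.smul_apply, smul_eq_mul, toR]
  have e : ∀ a b : ℝ, a ≤ b ↔ t * a ≤ t * b := fun a b => (mul_le_mul_iff_right₀ ht0).symm
  have c : ∀ a : ℝ, (t : ℝ) * ((t : ℝ)⁻¹ * a) = a := fun a => by field_simp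
  have d1 : (t : ℝ) * (k * ((t : ℝ)⁻¹ * x 0 + (t : ℝ)⁻¹ * x 1 - 1)) = k * (x 0 + x 1 - t) := by
    field_simp
  have d2 : ∀ a : ℝ, (t : ℝ) * (1 + k * ((t : ℝ)⁻¹ * a)) = t + k * a := fun a => by field_simp
  rw [e 0, e _ 1, e 0, e _ 1, e 0, e (k * _), e _ (1 + _), e _ (1 + _)]
  simp only [c, d1, d2, mul_zero, mul_one]
  norm_cast

lemma count (k t : ℕ) (ht : 1 ≤ t) :
    {x : Fin 3 → ℤ | toR x ∈ (t : ℝ) • ineqSet k}.ncard =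
      ∑ a ∈ Finset.Icc (0 : ℤ) t, ∑ b ∈ Finset.Icc (0 : ℤ) t,
        (t + k * min a b + 1 - k * max 0 (a + b - t)).toNat := by
  set F : Finset ((_ : ℤ × ℤ) × ℤ) :=
    (Finset.Icc (0 : ℤ) t ×ˢ Finset.Icc (0 : ℤ) t).sigma
      (fun p => Finset.Icc ((k : ℤ) * max 0 (p.1 + p.2 - t)) (t + k * min p.1 p.2)) with hF
  have hinj : Function.Injective
      (fun s : (_ : ℤ × ℤ) × ℤ => (![s.1.1, s.1.2, s.2] : Fin 3 → ℤ)) := by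
    rintro ⟨⟨a, b⟩, c⟩ ⟨⟨a', b'⟩, c'⟩ h
    have h0 := congrFun h 0
    have h1 := congrFun h 1
    have h2 := congrFun h 2
    simp at h0 h1 h2
    subst h0 h1 h2
    rfl
  have hk : (0 : ℤ) ≤ k := by positivity
  have hset : {x : Fin 3 → ℤ | toR x ∈ (t : ℝ) • ineqSet k} =
      (fun s : (_ : ℤ × ℤ) × ℤ => (![s.1.1, s.1.2, s.2] : Fin 3 → ℤ)) '' (F : Set _) := by
    ext x
    rw [Set.mem_ofPred_eq, mem_scaled k t ht]
    have hmem : (0 ≤ x 0 ∧ x 0 ≤ t ∧ 0 ≤ x 1 ∧ x 1 ≤ t ∧ 0 ≤ x 2 ∧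
      (k : ℤ) * (x 0 + x 1 - t) ≤ x 2 ∧ x 2 ≤ t + k * x 0 ∧ x 2 ≤ t + k * x 1) ↔
        (⟨(x 0, x 1), x 2⟩ : (_ : ℤ × ℤ) × ℤ) ∈ F := by
      simp only [hF, Finset.mem_sigma, Finset.mem_product, Finset.mem_Icc,
        mul_max_of_nonneg _ _ hk, mul_min_of_nonneg _ _ hk, max_le_iff, mul_zero]
      rw [← min_add_add_left, le_min_iff]
      tauto
    rw [hmem]
    constructor
    · intro h
      refine ⟨_, h, ?_⟩
      ext i; fin_cases i <;> rfl
    · rintro ⟨s, hs, rfl⟩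
      exact hs
  rw [hset, Set.ncard_image_of_injective _ hinj, Set.ncard_coe_finset, Finset.card_sigma,
    Finset.sum_product]
  refine Finset.sum_congr rfl fun a _ => Finset.sum_congr rfl fun b _ => ?_
  rw [Int.card_Icc]

lemma icc1 : Finset.Icc (0 : ℤ) 1 = {0, 1} := by decide
lemma icc2 : Finset.Icc (0 : ℤ) 2 = {0, 1, 2} := by decide
lemma icc3 : Finset.Icc (0 : ℤ) 3 = {0, 1, 2, 3} := by decide
lemma icc4 : Finset.Icc (0 : ℤ) 4 = {0, 1, 2, 3, 4} := by decide

lemma count1 (k : ℕ) : {x : Fin 3 → ℤ | toR x ∈ ((1 : ℕ) : ℝ) • ineqSet k}.ncard = 8 := by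
  rw [count k 1 le_rfl, Nat.cast_one, icc1]
  simp
  omega

lemma count2 (k : ℕ) : {x : Fin 3 → ℤ | toR x ∈ ((2 : ℕ) : ℝ) • ineqSet k}.ncard = 27 + k := by
  rw [count k 2 (by norm_num), Nat.cast_ofNat, icc2]
  simp
  omega

lemma count3 (k : ℕ) :
    {x : Fin 3 → ℤ | toR x ∈ ((3 : ℕ) : ℝ) • ineqSet k}.ncard = 64 + 4 * k := by
  rw [count k 3 (by norm_num), Nat.cast_ofNat, icc3]
  simp
  omega

lemma count4 (k : ℕ) :
    {x : Fin 3 → ℤ | toR x ∈ ((4 : ℕ) : ℝ) • ineqSet k}.ncard = 125 + 10 * k := by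
  rw [count k 4 (by norm_num), Nat.cast_ofNat, icc4]
  simp
  omega

/-- lower and upper boundary functions -/
noncomputable def lowF (k : ℕ) (p : ℝ × ℝ) : ℝ := k * max 0 (p.1 + p.2 - 1)
noncomputable def upF (k : ℕ) (p : ℝ × ℝ) : ℝ := 1 + k * min p.1 p.2

lemma cont_lowF (k : ℕ) : Continuous (lowF k) := by unfold lowF; fun_prop
lemma cont_upF (k : ℕ) : Continuous (upF k) := by unfold upF; fun_prop

lemma inner_int (x : ℝ) (hx0 : 0 ≤ x) (hx1 : x ≤ 1) :
    (∫ y in (0 : ℝ)..1, (min x y - max 0 (x + y - 1))) = x - x ^ 2 := by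
  have c1 : Continuous fun y : ℝ => min x y := by fun_prop
  have c2 : Continuous fun y : ℝ => max 0 (x + y - 1) := by fun_prop
  rw [intervalIntegral.integral_sub (c1.intervalIntegrable _ _) (c2.intervalIntegrable _ _)]
  rw [← intervalIntegral.integral_add_adjacent_intervals (b := x) (c1.intervalIntegrable _ _)
    (c1.intervalIntegrable _ _)]
  rw [← intervalIntegral.integral_add_adjacent_intervals (b := 1 - x) (c2.intervalIntegrable 0 _)
    (c2.intervalIntegrable _ _)]
  have e1 : (∫ y in (0 : ℝ)..x, min x y) = ∫ y in (0 : ℝ)..x, y := by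
    apply intervalIntegral.integral_congr
    intro y hy
    rw [Set.uIcc_of_le hx0] at hy
    exact min_eq_right hy.2
  have e2 : (∫ y in x..1, min x y) = ∫ y in x..1, x := by
    apply intervalIntegral.integral_congr
    intro y hy
    rw [Set.uIcc_of_le hx1] at hy
    exact min_eq_left hy.1
  have e3 : (∫ y in (0 : ℝ)..(1 - x), max 0 (x + y - 1)) = ∫ y in (0 : ℝ)..(1 - x), (0 : ℝ) := by
    apply intervalIntegral.integral_congr
    intro y hy
    rw [Set.uIcc_of_le (by linarith)] at hy
    exact max_eq_left (by linarith [hy.2])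
  have e4 : (∫ y in (1 - x)..1, max 0 (x + y - 1)) = ∫ y in (1 - x)..1, (y - (1 - x)) := by
    apply intervalIntegral.integral_congr
    intro y hy
    rw [Set.uIcc_of_le (by linarith)] at hy
    have : max 0 (x + y - 1) = x + y - 1 := max_eq_right (by linarith [hy.1])
    simp only [this]; ring
  rw [e1, e2, e3, e4]
  rw [intervalIntegral.integral_sub (by simp) (by simp)]
  simp only [integral_id, intervalIntegral.integral_const, smul_eq_mul]
  ring

lemma vol_int (k : ℕ) :
    (∫ p in (Set.Icc (0 : ℝ) 1 ×ˢ Set.Icc (0 : ℝ) 1), (upF k - lowF k) p) = 1 + k / 6 := by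
  rw [Measure.volume_eq_prod, setIntegral_prod]
  · have : ∀ x ∈ Set.Icc (0 : ℝ) 1, (∫ y in Set.Icc (0 : ℝ) 1, (upF k - lowF k) (x, y)) =
        1 + k * (x - x ^ 2) := by
      intro x hx
      rw [integral_Icc_eq_integral_Ioc, ← intervalIntegral.integral_of_le zero_le_one]
      have : ∀ y, (upF k - lowF k) (x, y) = 1 + k * (min x y - max 0 (x + y - 1)) := by
        intro y; simp only [Pi.sub_apply, upF, lowF]; ring
      simp only [this]
      rw [intervalIntegral.integral_add (by simp)
        (Continuous.intervalIntegrable (by fun_prop) _ _), intervalIntegral.integral_const_mul,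
        inner_int x hx.1 hx.2]
      simp
    rw [setIntegral_congr_fun measurableSet_Icc this]
    rw [integral_Icc_eq_integral_Ioc, ← intervalIntegral.integral_of_le zero_le_one]
    rw [intervalIntegral.integral_add (by simp)
        (Continuous.intervalIntegrable (by fun_prop) _ _), intervalIntegral.integral_const_mul,
        intervalIntegral.integral_sub (by simp) (by simp)]
    simp only [integral_id, integral_pow, intervalIntegral.integral_const, smul_eq_mul]
    norm_num
    ring
  · exact (((cont_upF k).sub (cont_lowF k)).continuousOn).integrableOn_compact
      (isCompact_Icc.prod isCompact_Icc)

lemma vol_ineqSet (k : ℕ) : (volume (ineqSet k)).toReal = 1 + k / 6 := by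
  have mp1 := volume_preserving_piFinSuccAbove (fun _ : Fin 3 => ℝ) (Fin.last 2)
  have mp2 := volume_preserving_finTwoArrow ℝ
  have mp3 : MeasurePreserving (Prod.map (id : ℝ → ℝ) (MeasurableEquiv.finTwoArrow (α := ℝ)))
      volume volume := (MeasurePreserving.id volume).prod mp2
  have mp := (Measure.measurePreserving_swap (μ := (volume : Measure ℝ))
    (ν := (volume : Measure (ℝ × ℝ)))).comp (mp3.comp mp1)
  set D : Set (ℝ × ℝ) := Set.Icc (0 : ℝ) 1 ×ˢ Set.Icc (0 : ℝ) 1 with hD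
  set R : Set ((ℝ × ℝ) × ℝ) := {p | p.1 ∈ D ∧ p.2 ∈ Set.Icc (lowF k p.1) (upF k p.1)} with hR
  have hDm : MeasurableSet D := measurableSet_Icc.prod measurableSet_Icc
  have hRm : MeasurableSet R :=
    measurableSet_region_between_cc (cont_lowF k).measurable (cont_upF k).measurable hDm
  have hpre : ineqSet k = (fun p : Fin 3 → ℝ => ((p 0, p 1), p 2)) ⁻¹' R := by
    ext p
    have hk : (0 : ℝ) ≤ k := by positivity
    simp only [ineqSet, hR, hD, Set.mem_preimage, Set.mem_ofPred_eq, Set.mem_prod, Set.mem_Icc,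
      lowF, upF, mul_max_of_nonneg _ _ hk, mul_min_of_nonneg _ _ hk, max_le_iff, mul_zero]
    rw [← min_add_add_left, le_min_iff]
    tauto
  have hv : volume (ineqSet k) = volume R := by
    rw [hpre]
    exact mp.measure_preimage hRm.nullMeasurableSet
  have hle : ∀ p ∈ D, lowF k p ≤ upF k p := by
    rintro ⟨x, y⟩ ⟨⟨h1, h2⟩, h3, h4⟩
    simp only at h1 h2 h3 h4
    have hk : (0 : ℝ) ≤ k := by positivity
    have : max 0 (x + y - 1) ≤ min x y := by
      refine max_le (le_min h1 h3) (le_min ?_ ?_) <;> linarith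
    have := mul_le_mul_of_nonneg_left this hk
    simp only [lowF, upF]
    linarith
  have hint : ∀ f : ℝ × ℝ → ℝ, Continuous f → IntegrableOn f D volume := fun f hf =>
    hf.continuousOn.integrableOn_compact (isCompact_Icc.prod isCompact_Icc)
  have hreg := volume_regionBetween_eq_integral (μ := (volume : Measure (ℝ × ℝ)))
    (hint _ (cont_lowF k)) (hint _ (cont_upF k)) hDm hle
  have hae : volume R = volume (regionBetween (lowF k) (upF k) D) := by
    rw [Measure.volume_eq_prod, Measure.prod_apply hRm, Measure.prod_apply
      (measurableSet_regionBetween (cont_lowF k).measurable (cont_upF k).measurable hDm)]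
    refine lintegral_congr fun p => ?_
    by_cases hp : p ∈ D
    · have e1 : Prod.mk p ⁻¹' R = Set.Icc (lowF k p) (upF k p) := by
        ext z; simp [hR, hp]
      have e2 : Prod.mk p ⁻¹' regionBetween (lowF k) (upF k) D
          = Set.Ioo (lowF k p) (upF k p) := by
        ext z; simp [regionBetween, hp]
      rw [e1, e2, Real.volume_Icc, Real.volume_Ioo]
    · have e1 : Prod.mk p ⁻¹' R = ∅ := by
        ext z; simp [hR, hp]
      have e2 : Prod.mk p ⁻¹' regionBetween (lowF k) (upF k) D = ∅ := by
        ext z; simp [regionBetween, hp]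
      rw [e1, e2]
  rw [hv, hae, Measure.volume_eq_prod, hreg, vol_int, ENNReal.toReal_ofReal (by positivity)]

/-- For each nonnegative integer `k`, the polytope
`Q = conv(0, e₁, e₂, e₃, e₁+e₃, e₂+e₃, e₁+e₂+ke₃, e₁+e₂+(k+1)e₃) ⊂ ℝ³` has
normalized volume `k + 6`, and when `k ≥ 2` it has exactly `8` lattice points
(its vertices); consequently its `h*`-vector is `(1, 4, k+1, 0)`. -/
theorem stmt18 (k : ℕ)
    (vtx : Fin 8 → Fin 3 → ℤ)
    (hvtx : vtx = ![![0, 0, 0], ![1, 0, 0], ![0, 1, 0], ![0, 0, 1], ![1, 0, 1],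
      ![0, 1, 1], ![1, 1, (k : ℤ)], ![1, 1, (k : ℤ) + 1]])
    (Q : Set (Fin 3 → ℝ))
    (hQ : Q = convexHull ℝ (Set.range fun a : Fin 8 => toR (vtx a))) :
    (6 : ℝ) * (volume Q).toReal = (k : ℝ) + 6 ∧
    (2 ≤ k →
      {x : Fin 3 → ℤ | toR x ∈ Q} = Set.range vtx ∧
      {x : Fin 3 → ℤ | toR x ∈ Q}.ncard = 8 ∧
      ∀ h : Fin 4 → ℤ,
        (∀ t : ℕ, 1 ≤ t →
          ({x : Fin 3 → ℤ | toR x ∈ (t : ℝ) • Q}.ncard : ℤ) =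
            ∑ i : Fin 4, h i * (Nat.choose (t + 3 - (i : ℕ)) 3 : ℤ)) →
        h = ![1, 4, (k : ℤ) + 1, 0]) := by
  have hv : vtx = vv k := hvtx
  subst hv
  rw [hull_eq] at hQ
  subst hQ
  refine ⟨by rw [vol_ineqSet]; ring, fun _ => ⟨?_, ?_, ?_⟩⟩
  · ext x
    have hm := mem_scaled k 1 le_rfl x
    rw [Nat.cast_one, one_smul] at hm
    rw [Set.mem_ofPred_eq, hm]
    constructor
    · rintro ⟨h1, h2, h3, h4, h5, h6, h7, h8⟩
      have ex : x = ![x 0, x 1, x 2] := by ext i; fin_cases i <;> rfl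
      generalize x 0 = a at *
      generalize x 1 = b at *
      generalize x 2 = c at *
      subst ex
      have ha : a = 0 ∨ a = 1 := by omega
      have hb : b = 0 ∨ b = 1 := by omega
      rcases ha with rfl | rfl <;> rcases hb with rfl | rfl <;> simp at h5 h6 h7 h8
      · have : c = 0 ∨ c = 1 := by omega
        rcases this with rfl | rfl
        · exact ⟨0, rfl⟩
        · exact ⟨3, rfl⟩
      · have : c = 0 ∨ c = 1 := by omega
        rcases this with rfl | rfl
        · exact ⟨2, rfl⟩
        · exact ⟨5, rfl⟩
      · have : c = 0 ∨ c = 1 := by omega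
        rcases this with rfl | rfl
        · exact ⟨1, rfl⟩
        · exact ⟨4, rfl⟩
      · have : c = k ∨ c = k + 1 := by omega
        rcases this with rfl | rfl
        · exact ⟨6, rfl⟩
        · exact ⟨7, rfl⟩
    · rintro ⟨a, rfl⟩
      fin_cases a <;> simp [vv] <;> omega
  · have := count1 k
    rwa [Nat.cast_one, one_smul] at this
  · intro h hh
    have h1 := hh 1 (by norm_num)
    have h2 := hh 2 (by norm_num)
    have h3 := hh 3 (by norm_num)
    have h4 := hh 4 (by norm_num)
    rw [count1] at h1
    rw [count2] at h2
    rw [count3] at h3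
    rw [count4] at h4
    simp [Fin.sum_univ_four, Nat.choose] at h1 h2 h3 h4
    ext i
    fin_cases i <;> simp <;> omega
end
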